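/- Let r > 0 and ω > 0. The purely imaginary number iω satisfies the characteristic equation iω = −r·∫_{s∈(0,1)} e^{−iωs} ds if and only if there exists n ∈ ℕ such that ω = (2n+1)π and r = ω²/2. -/

import Mathlib

open Real

/-!
For `ω ≠ 0` the integral equals `(1 - e^{-iω}) / (iω)`, so the characteristic equation is
`ω² = r (1 - e^{-iω})`. Its real and imaginary parts are `ω² = r (1 - cos ω)` and `r sin ω = 0`.
Since `r ≠ 0`, `cos ω = ±1`; the value `1` would force `ω = 0`, so `cos ω = -1`, i.e. `ω` is an odd
multiple of `π`, and then `r = ω² / 2`.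
-/

/-- The real and imaginary parts of the characteristic equation at `iω`, after evaluating the
integral and clearing the denominator `iω`. -/
lemma char_eq_iff_re_im (r ω : ℝ) (hω : ω ≠ 0) :
    (Complex.I * (ω : ℂ) =
        -(r : ℂ) * ∫ s in (0:ℝ)..1, Complex.exp (-(Complex.I * (ω : ℂ)) * (s : ℂ)))
      ↔ ω ^ 2 = r * (1 - cos ω) ∧ r * sin ω = 0 := by
  have hc : Complex.I * (ω : ℂ) ≠ 0 :=
    mul_ne_zero Complex.I_ne_zero (Complex.ofReal_ne_zero.mpr hω)
  have hexp : Complex.exp (-(Complex.I * (ω : ℂ))) = (cos ω : ℂ) - (sin ω : ℂ) * Complex.I := by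
    rw [show -(Complex.I * (ω : ℂ)) = (-(ω : ℂ)) * Complex.I by ring, Complex.exp_mul_I,
      Complex.cos_neg, Complex.sin_neg, Complex.ofReal_cos, Complex.ofReal_sin]
    ring
  rw [integral_exp_mul_complex (neg_ne_zero.mpr hc), Complex.ofReal_one, Complex.ofReal_zero,
    mul_one, mul_zero, Complex.exp_zero, hexp, ← mul_div_assoc, eq_div_iff (neg_ne_zero.mpr hc),
    show Complex.I * (ω : ℂ) * -(Complex.I * (ω : ℂ)) = ((ω ^ 2 : ℝ) : ℂ) by
      push_cast
      linear_combination (-(ω : ℂ) ^ 2) * Complex.I_mul_I,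
    show -(r : ℂ) * ((cos ω : ℂ) - (sin ω : ℂ) * Complex.I - 1)
        = ((r * (1 - cos ω) : ℝ) : ℂ) + ((r * sin ω : ℝ) : ℂ) * Complex.I by
      push_cast
      ring,
    Complex.ext_iff]
  simp only [Complex.add_re, Complex.add_im, Complex.ofReal_re, Complex.ofReal_im,
    Complex.re_ofReal_mul, Complex.im_ofReal_mul, Complex.I_re, Complex.I_im, mul_zero, mul_one,
    add_zero, zero_add]
  exact and_congr_right fun _ => eq_comm

/-- For `r > 0` and `ω > 0`, `iω` is a root of the characteristic equation
`λ = −r ∫₀¹ e^{−λ s} ds` if and only if `ω = (2n+1)π` for some `n ∈ ℕ` and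
`r = ω²/2`. -/
theorem char_purely_imaginary_roots (r ω : ℝ) (hr : r > 0) (hω : ω > 0) :
    (Complex.I * (ω : ℂ) =
        -(r : ℂ) * ∫ s in (0:ℝ)..1, Complex.exp (-(Complex.I * (ω : ℂ)) * (s : ℂ)))
      ↔ ∃ n : ℕ, ω = (2 * (n : ℝ) + 1) * π ∧ r = ω ^ 2 / 2 := by
  rw [char_eq_iff_re_im r ω hω.ne']
  constructor
  · rintro ⟨hre, him⟩
    have hsin : sin ω = 0 := (mul_eq_zero.mp him).resolve_left hr.ne'
    rcases Real.sin_eq_zero_iff_cos_eq.mp hsin with hcos | hcos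
    · rw [hcos] at hre
      nlinarith [pow_pos hω 2]
    · obtain ⟨k, hk⟩ := Real.cos_eq_neg_one_iff.mp hcos
      -- Positivity of `ω` gives `2k + 1 > 0`, so the integer `k` is a natural number.
      have hk0 : 0 ≤ k := by
        have h : (0 : ℝ) < 2 * k + 1 := by
          refine pos_of_mul_pos_left (b := π) ?_ pi_pos.le
          linarith
        have h' : (0 : ℤ) < 2 * k + 1 := by exact_mod_cast h
        omega
      lift k to ℕ using hk0
      refine ⟨k, ?_, ?_⟩
      · rw [← hk]
        push_cast
        ring
      · rw [hcos] at hre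
        linarith
  · rintro ⟨n, hn, hr2⟩
    have hcos : cos ω = -1 := by
      refine Real.cos_eq_neg_one_iff.mpr ⟨n, ?_⟩
      rw [hn]
      push_cast
      ring
    refine ⟨?_, ?_⟩
    · rw [hcos, hr2]
      ring
    · rw [Real.sin_eq_zero_iff_cos_eq.mpr (Or.inr hcos), mul_zero]
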